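/- arXiv:1006.1251 — 5 statements merged into one kernel-verified Lean document; each statement's English description precedes it below -/
import Mathlib

section
/- Let B and A be unital complex algebras with A a *-algebra, let δ : B → B ⊗ A be an algebra homomorphism, and let u ∈ M_m(A) satisfy Σ_{p=1}^m (u_{rp})* u_{sp} = δ_{rs}·1_A for all r, s. Let w ∈ M_n(A). Suppose V ∈ M_{mn}(B), indexed by pairs (p,i) with 1 ≤ p ≤ m, 1 ≤ i ≤ n, is (u⊙w)-fixed for δ, i.e. δ(V_{(p,i),(q,j)}) = Σ_{(r,k)} Σ_{(s,l)} V_{(r,k),(s,l)} ⊗ (u_{rp} w_{ki})* (u_{sq} w_{lj}) for all (p,i),(q,j). Then the matrix D ∈ M_n(B) defined by D_{ij} = Σ_{p=1}^m V_{(p,i),(p,j)} is w-fixed for δ, i.e. δ(D_{ij}) = Σ_{k,l=1}^n D_{kl} ⊗ (w_{ki})* w_{lj} for all i, j. -/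
open scoped TensorProduct

/-- `Z ∈ M_d(B)` is `u`-fixed for `δ`: membership in the fixed point
algebra `(B ⊗ M_d)^{δ_u}`. -/
def IsFixed {B A : Type*} [Ring B] [Algebra ℂ B] [Ring A] [Algebra ℂ A] [StarRing A]
    {d : Type*} [Fintype d] (δ : B →ₐ[ℂ] B ⊗[ℂ] A)
    (u : Matrix d d A) (Z : Matrix d d B) : Prop :=
  ∀ i j, δ (Z i j) = ∑ l, ∑ m, Z l m ⊗ₜ[ℂ] (star (u l i) * u m j)

/-- If `Σ_p (u_{rp})* u_{sp} = δ_{rs} 1_A` (the adjoint of `u` is unitary) and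
`V ∈ M_{mn}(B)` is `(u⊙w)`-fixed for `δ`, then the partial trace
`D_{ij} = Σ_p V_{(p,i),(p,j)}` is `w`-fixed for `δ`. -/
theorem stmt1 {B A : Type*} [Ring B] [Algebra ℂ B] [Ring A] [Algebra ℂ A] [StarRing A]
    {m n : ℕ} (δ : B →ₐ[ℂ] B ⊗[ℂ] A)
    (u : Matrix (Fin m) (Fin m) A)
    (hu : ∀ r s : Fin m,
      ∑ p : Fin m, star (u r p) * u s p = if r = s then (1 : A) else 0)
    (w : Matrix (Fin n) (Fin n) A)
    (V : Matrix (Fin m × Fin n) (Fin m × Fin n) B)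
    (hV : IsFixed δ (fun pr qs : Fin m × Fin n => u pr.1 qs.1 * w pr.2 qs.2) V) :
    IsFixed δ w (fun i j => ∑ p : Fin m, V (p, i) (p, j)) := by
  intro i j
  have key : ∀ (r s : Fin m) (k l : Fin n),
      ∑ p : Fin m, star (u r p * w k i) * (u s p * w l j)
        = if r = s then star (w k i) * w l j else 0 := by
    intro r s k l
    have h : ∀ p : Fin m, star (u r p * w k i) * (u s p * w l j)
        = star (w k i) * (star (u r p) * u s p) * w l j := by
      intro p
      rw [star_mul]
      simp only [mul_assoc]
    simp only [h]
    rw [← Finset.sum_mul, ← Finset.mul_sum, hu]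
    split_ifs <;> simp
  have hV' : ∀ p : Fin m, δ (V (p, i) (p, j)) =
      ∑ a : Fin m × Fin n, ∑ b : Fin m × Fin n,
        V a b ⊗ₜ[ℂ] (star (u a.1 p * w a.2 i) * (u b.1 p * w b.2 j)) :=
    fun p => hV (p, i) (p, j)
  have step : ∑ p : Fin m, δ (V (p, i) (p, j)) =
      ∑ a : Fin m × Fin n, ∑ b : Fin m × Fin n,
        V a b ⊗ₜ[ℂ] (if a.1 = b.1 then star (w a.2 i) * w b.2 j else 0) := by
    simp only [hV']
    rw [Finset.sum_comm]
    refine Finset.sum_congr rfl fun a _ => ?_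
    rw [Finset.sum_comm]
    refine Finset.sum_congr rfl fun b _ => ?_
    rw [← TensorProduct.tmul_sum, key]
  show δ (∑ p : Fin m, V (p, i) (p, j)) =
    ∑ k, ∑ l, (∑ p : Fin m, V (p, k) (p, l)) ⊗ₜ[ℂ] (star (w k i) * w l j)
  rw [map_sum, step]
  simp only [Fintype.sum_prod_type, TensorProduct.sum_tmul]
  rw [Finset.sum_comm]
  refine Finset.sum_congr rfl fun k _ => ?_
  rw [Finset.sum_comm (s := (Finset.univ : Finset (Fin n)))]
  refine Finset.sum_congr rfl fun r _ => ?_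
  rw [Finset.sum_comm]
  refine Finset.sum_congr rfl fun l _ => ?_
  rw [Finset.sum_eq_single r]
  · simp
  · intro b _ hb
    simp [Ne.symm hb]
  · simp
end

section
/- Let B and A be unital complex *-algebras and let δ : B → B ⊗ A be a *-algebra homomorphism. Let u ∈ M_m(A) be arbitrary and let w ∈ M_n(A) satisfy Σ_{i=1}^n w_{ai} (w_{ki})* = δ_{ak}·1_A for all a, k. Let y_1, …, y_n ∈ B satisfy δ(y_i) = Σ_{k=1}^n y_k ⊗ w_{ki} for all i (a spectral row for w). If Z ∈ M_{mn}(B), indexed by pairs, is (u⊙w)-fixed for δ, i.e. δ(Z_{(p,i),(q,j)}) = Σ_{(r,k)} Σ_{(s,l)} Z_{(r,k),(s,l)} ⊗ (u_{rp} w_{ki})* (u_{sq} w_{lj}), then the matrix W ∈ M_m(B) with entries W_{pq} = Σ_{i,j=1}^n y_i · Z_{(p,i),(q,j)} · (y_j)* is u-fixed for δ, i.e. δ(W_{pq}) = Σ_{r,s=1}^m W_{rs} ⊗ (u_{rp})* u_{sq} for all p, q. -/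
open scoped TensorProduct

/-- The star operation on the algebraic tensor product `B ⊗[ℂ] A`,
determined by `(b ⊗ a)* = b* ⊗ a*`. -/
noncomputable def tensorStar (B A : Type*) [Ring B] [Algebra ℂ B] [StarRing B]
    [StarModule ℂ B] [Ring A] [Algebra ℂ A] [StarRing A] [StarModule ℂ A] :
    B ⊗[ℂ] A →+ B ⊗[ℂ] A :=
  TensorProduct.liftAddHom
    { toFun := fun b =>
        { toFun := fun a => star b ⊗ₜ[ℂ] star a
          map_zero' := by simp
          map_add' := fun a a' => by simp [star_add, TensorProduct.tmul_add] }
      map_zero' := by ext a; simp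
      map_add' := fun b b' => by ext a; simp [star_add, TensorProduct.add_tmul] }
    (fun c b a => by
      show star (c • b) ⊗ₜ[ℂ] star a = star b ⊗ₜ[ℂ] star (c • a)
      rw [star_smul, star_smul, TensorProduct.smul_tmul])

/-- Formula (1) of the paper: if `δ` is a *-algebra homomorphism, `u ∈ M_m(A)` is
arbitrary, `w ∈ M_n(A)` satisfies `Σ_i w_{ai} (w_{ki})* = δ_{ak} 1_A`, the `y_i`
form a spectral row for `w`, and `Z ∈ M_{mn}(B)` is `(u⊙w)`-fixed for `δ`, then
`W_{pq} = Σ_{i,j} y_i Z_{(p,i),(q,j)} (y_j)*` is `u`-fixed for `δ`. -/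
theorem stmt2 {B A : Type*} [Ring B] [Algebra ℂ B] [StarRing B] [StarModule ℂ B]
    [Ring A] [Algebra ℂ A] [StarRing A] [StarModule ℂ A]
    {m n : ℕ} (δ : B →ₐ[ℂ] B ⊗[ℂ] A)
    (hδ : ∀ b : B, δ (star b) = tensorStar B A (δ b))
    (u : Matrix (Fin m) (Fin m) A)
    (w : Matrix (Fin n) (Fin n) A)
    (hw : ∀ a k : Fin n,
      ∑ i : Fin n, w a i * star (w k i) = if a = k then (1 : A) else 0)
    (y : Fin n → B)
    (hy : ∀ i : Fin n, δ (y i) = ∑ k : Fin n, y k ⊗ₜ[ℂ] w k i)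
    (Z : Matrix (Fin m × Fin n) (Fin m × Fin n) B)
    (hZ : IsFixed δ (fun pr qs : Fin m × Fin n => u pr.1 qs.1 * w pr.2 qs.2) Z) :
    IsFixed δ u
      (fun p q => ∑ i : Fin n, ∑ j : Fin n, y i * Z (p, i) (q, j) * star (y j)) := by
  have h1 : ∀ k, ∑ i, δ (y i) * ((1 : B) ⊗ₜ[ℂ] star (w k i)) = y k ⊗ₜ[ℂ] (1 : A) := by
    intro k
    simp only [hy, Finset.sum_mul, Algebra.TensorProduct.tmul_mul_tmul, mul_one]
    rw [Finset.sum_comm]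
    simp only [← TensorProduct.tmul_sum, hw]
    rw [Finset.sum_eq_single k]
    · simp
    · intro b _ hb
      simp [hb]
    · simp
  have hs : ∀ j, δ (star (y j)) = ∑ b, star (y b) ⊗ₜ[ℂ] star (w b j) := by
    intro j
    rw [hδ, hy, map_sum]
    rfl
  have h2 : ∀ l, ∑ j, ((1 : B) ⊗ₜ[ℂ] w l j) * δ (star (y j)) = star (y l) ⊗ₜ[ℂ] (1 : A) := by
    intro l
    simp only [hs, Finset.mul_sum, Algebra.TensorProduct.tmul_mul_tmul, one_mul]
    rw [Finset.sum_comm]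
    simp only [← TensorProduct.tmul_sum, hw]
    rw [Finset.sum_eq_single l]
    · simp
    · intro b _ hb
      simp [hb.symm]
    · simp
  intro p q
  have h3 : ∀ i j, δ (Z (p, i) (q, j)) = ∑ x : Fin m × Fin n, ∑ z : Fin m × Fin n,
      ((1 : B) ⊗ₜ[ℂ] star (w x.2 i)) * (Z x z ⊗ₜ[ℂ] (star (u x.1 p) * u z.1 q)) *
        ((1 : B) ⊗ₜ[ℂ] w z.2 j) := by
    intro i j
    rw [hZ]
    simp only [Algebra.TensorProduct.tmul_mul_tmul, one_mul, mul_one, star_mul, mul_assoc]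
  have h4 : δ (∑ i : Fin n, ∑ j : Fin n, y i * Z (p, i) (q, j) * star (y j)) =
      ∑ x : Fin m × Fin n, ∑ z : Fin m × Fin n,
        (∑ i, δ (y i) * ((1 : B) ⊗ₜ[ℂ] star (w x.2 i))) *
          (Z x z ⊗ₜ[ℂ] (star (u x.1 p) * u z.1 q)) *
          (∑ j, ((1 : B) ⊗ₜ[ℂ] w z.2 j) * δ (star (y j))) := by
    simp only [map_sum, map_mul, h3]
    simp only [Finset.sum_mul, Finset.mul_sum]
    simp only [← Finset.sum_product', Finset.univ_product_univ]
    refine Finset.sum_bij' (fun a _ => (a.2.2.1, (a.2.2.2, (a.2.1, a.1))))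
      (fun a _ => (a.2.2.2, (a.2.2.1, (a.1, a.2.1)))) ?_ ?_ ?_ ?_ ?_
    · simp
    · simp
    · simp
    · simp
    · intro a _
      simp only [mul_assoc]
  refine h4.trans ?_
  simp only [h1, h2, Algebra.TensorProduct.tmul_mul_tmul, one_mul, mul_one]
  simp only [Fintype.sum_prod_type, TensorProduct.sum_tmul]
  refine Finset.sum_congr rfl fun r _ => ?_
  rw [Finset.sum_comm]
end

section
/- Let B and A be unital complex algebras and let δ : B → B ⊗ A be an algebra homomorphism. Let u ∈ M_m(A) and w ∈ M_n(A). Suppose X ∈ M_m(B) is u-spectral for δ (δ(X_{lk}) = Σ_{a=1}^m X_{la} ⊗ u_{ak} for all l, k) and Y ∈ M_n(B) is w-spectral for δ (δ(Y_{ij}) = Σ_{b=1}^n Y_{ib} ⊗ w_{bj} for all i, j). Then the matrix X⊙Y ∈ M_{mn}(B), indexed by pairs, with entries (X⊙Y)_{(l,i),(k,j)} = X_{lk} · Y_{ij}, is (u⊙w)-spectral for δ: δ((X⊙Y)_{(l,i),(k,j)}) = Σ_{(a,b)} (X⊙Y)_{(l,i),(a,b)} ⊗ (u_{ak} w_{bj})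 for all (l,i), (k,j). -/
open scoped TensorProduct

/-- `X ∈ M_d(B)` is `u`-spectral for `δ`: membership in the spectral subspace `B₂^δ(u)`. -/
def IsSpectral {B A : Type*} [Ring B] [Algebra ℂ B] [Ring A] [Algebra ℂ A]
    {d : Type*} [Fintype d] (δ : B →ₐ[ℂ] B ⊗[ℂ] A)
    (u : Matrix d d A) (X : Matrix d d B) : Prop :=
  ∀ i j, δ (X i j) = ∑ k, X i k ⊗ₜ[ℂ] u k j

/-- If `X ∈ B₂^δ(u)` and `Y ∈ B₂^δ(w)`, then the Kronecker product
`X⊙Y`, with entries `(X⊙Y)_{(l,i),(k,j)} = X_{lk} Y_{ij}`, lies in `B₂^δ(u⊙w)`. -/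
theorem stmt3 {B A : Type*} [Ring B] [Algebra ℂ B] [Ring A] [Algebra ℂ A]
    {m n : ℕ} (δ : B →ₐ[ℂ] B ⊗[ℂ] A)
    (u : Matrix (Fin m) (Fin m) A) (w : Matrix (Fin n) (Fin n) A)
    (X : Matrix (Fin m) (Fin m) B) (Y : Matrix (Fin n) (Fin n) B)
    (hX : IsSpectral δ u X) (hY : IsSpectral δ w Y) :
    IsSpectral δ
      (fun pr qs : Fin m × Fin n => u pr.1 qs.1 * w pr.2 qs.2)
      (fun li kj : Fin m × Fin n => X li.1 kj.1 * Y li.2 kj.2) := by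
  rintro ⟨l, i⟩ ⟨k, j⟩
  show δ (X l k * Y i j) = ∑ p : Fin m × Fin n, (X l p.1 * Y i p.2) ⊗ₜ[ℂ] (u p.1 k * w p.2 j)
  rw [map_mul, hX l k, hY i j, Finset.sum_mul_sum, Fintype.sum_prod_type]
  simp only [Algebra.TensorProduct.tmul_mul_tmul]
end

section
/- Let B and A be unital complex algebras with A a *-algebra, let δ : B → B ⊗ A be an algebra homomorphism, and let u ∈ M_d(A) satisfy Σ_{k=1}^d u_{lk} (u_{rk})* = δ_{lr}·1_A for all l, r. If M ∈ M_d(B) is u-spectral for δ and Z ∈ M_d(B) is u-fixed for δ, then the matrix product M·Z ∈ M_d(B) is u-spectral for δ. -/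
open scoped TensorProduct

/-- If `Σ_k u_{lk} (u_{rk})* = δ_{lr} 1_A`, `M ∈ B₂^δ(u)` and
`Z ∈ (B ⊗ M_d)^{δ_u}`, then `M·Z ∈ B₂^δ(u)`: the spectral subspace is stable
under right multiplication by the fixed point algebra. -/
theorem stmt8 {B A : Type*} [Ring B] [Algebra ℂ B] [Ring A] [Algebra ℂ A] [StarRing A]
    {d : ℕ} (δ : B →ₐ[ℂ] B ⊗[ℂ] A)
    (u : Matrix (Fin d) (Fin d) A)
    (hu : ∀ l r : Fin d,
      ∑ k : Fin d, u l k * star (u r k) = if l = r then (1 : A) else 0)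
    (M Z : Matrix (Fin d) (Fin d) B)
    (hM : IsSpectral δ u M) (hZ : IsFixed δ u Z) :
    IsSpectral δ u (M * Z) := by
  intro i j
  have key : ∀ p l m : Fin d,
      ∑ k, (M i p * Z l m) ⊗ₜ[ℂ] (u p k * (star (u l k) * u m j))
        = if p = l then (M i p * Z l m) ⊗ₜ[ℂ] u m j else 0 := by
    intro p l m
    rw [← TensorProduct.tmul_sum]
    simp_rw [← mul_assoc]
    rw [← Finset.sum_mul, hu]
    split_ifs <;> simp
  calc δ ((M * Z) i j)
      = ∑ k, ∑ p, ∑ l, ∑ m,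
          (M i p * Z l m) ⊗ₜ[ℂ] (u p k * (star (u l k) * u m j)) := by
        rw [Matrix.mul_apply, map_sum]
        refine Finset.sum_congr rfl fun k _ => ?_
        rw [map_mul, hM i k, hZ k j, Finset.sum_mul]
        simp_rw [Finset.mul_sum, Algebra.TensorProduct.tmul_mul_tmul]
    _ = ∑ p, ∑ l, ∑ m, ∑ k,
          (M i p * Z l m) ⊗ₜ[ℂ] (u p k * (star (u l k) * u m j)) := by
        rw [Finset.sum_comm]
        refine Finset.sum_congr rfl fun p _ => ?_
        rw [Finset.sum_comm]
        refine Finset.sum_congr rfl fun l _ => ?_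
        rw [Finset.sum_comm]
    _ = ∑ p, ∑ m, (M i p * Z p m) ⊗ₜ[ℂ] u m j := by
        simp_rw [key]
        refine Finset.sum_congr rfl fun p _ => ?_
        rw [Finset.sum_comm]
        simp
    _ = ∑ k, (M * Z) i k ⊗ₜ[ℂ] u k j := by
        rw [Finset.sum_comm]
        simp_rw [Matrix.mul_apply, TensorProduct.sum_tmul]
end

section
/- Let B and A be unital complex algebras with A a *-algebra, let δ : B → B ⊗ A be an algebra homomorphism, and let u ∈ M_d(A) satisfy Σ_{k=1}^d u_{mk} (u_{rk})* = δ_{mr}·1_A for all m, r. If Z, Z' ∈ M_d(B) are both u-fixed for δ, then the matrix product Z·Z' ∈ M_d(B) is u-fixed for δ. -/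
open scoped TensorProduct

/-- If `Σ_k u_{mk} (u_{rk})* = δ_{mr} 1_A` and `Z, Z'` are `u`-fixed for `δ`,
then so is `Z·Z'`: the fixed point set `(B ⊗ M_d)^{δ_u}` is closed under
multiplication. -/
theorem stmt9 {B A : Type*} [Ring B] [Algebra ℂ B] [Ring A] [Algebra ℂ A] [StarRing A]
    {d : ℕ} (δ : B →ₐ[ℂ] B ⊗[ℂ] A)
    (u : Matrix (Fin d) (Fin d) A)
    (hu : ∀ m r : Fin d,
      ∑ k : Fin d, u m k * star (u r k) = if m = r then (1 : A) else 0)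
    (Z Z' : Matrix (Fin d) (Fin d) B)
    (hZ : IsFixed δ u Z) (hZ' : IsFixed δ u Z') :
    IsFixed δ u (Z * Z') := by
  have key : ∀ i j l m r s : Fin d,
      ∑ k : Fin d, (Z l m ⊗ₜ[ℂ] (star (u l i) * u m k)) * (Z' r s ⊗ₜ[ℂ] (star (u r k) * u s j))
        = if m = r then (Z l m * Z' r s) ⊗ₜ[ℂ] (star (u l i) * u s j) else 0 := by
    intro i j l m r s
    have h1 : ∀ k : Fin d, (star (u l i) * u m k) * (star (u r k) * u s j)
        = star (u l i) * (u m k * star (u r k)) * u s j := by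
      intro k
      simp only [mul_assoc]
    simp only [Algebra.TensorProduct.tmul_mul_tmul, h1]
    rw [← TensorProduct.tmul_sum, ← Finset.sum_mul, ← Finset.mul_sum, hu]
    split_ifs <;> simp
  intro i j
  have h2 : δ ((Z * Z') i j) = ∑ l, ∑ m, ∑ r, ∑ s, ∑ k : Fin d,
      (Z l m ⊗ₜ[ℂ] (star (u l i) * u m k)) * (Z' r s ⊗ₜ[ℂ] (star (u r k) * u s j)) := by
    rw [Matrix.mul_apply, map_sum]
    simp only [map_mul, hZ i _, hZ' _ j, Finset.sum_mul]
    simp only [Finset.mul_sum]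
    rw [Finset.sum_comm]
    refine Finset.sum_congr rfl fun l _ => ?_
    rw [Finset.sum_comm]
    refine Finset.sum_congr rfl fun m _ => ?_
    rw [Finset.sum_comm]
    refine Finset.sum_congr rfl fun r _ => ?_
    rw [Finset.sum_comm]
  rw [h2]
  simp only [key, Matrix.mul_apply, TensorProduct.sum_tmul]
  refine Finset.sum_congr rfl fun l _ => ?_
  have h3 : ∀ m : Fin d, (∑ r, ∑ s, if m = r then
      (Z l m * Z' r s) ⊗ₜ[ℂ] (star (u l i) * u s j) else 0)
      = ∑ s, (Z l m * Z' m s) ⊗ₜ[ℂ] (star (u l i) * u s j) := by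
    intro m
    rw [Finset.sum_comm]
    simp
  simp only [h3]
  exact Finset.sum_comm
end
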